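/- arXiv:1404.3282 — 3 statements merged into one kernel-verified Lean document; each statement's English description precedes it below -/
import Mathlib

section
/- Let K be an imaginary quadratic field, p a prime that splits in K as pO_K = 𝔭·𝔭̄ with 𝔭 ≠ 𝔭̄, r ≥ 1, and 𝔤 = p^r O_K. Let χ be a nonprincipal character of (O_K/𝔤)^× that is trivial on the image of (Z/p^r Z)^×. Then the conductor of χ is divisible by both 𝔭 and 𝔭̄. -/
open NumberField

/-- The conductor of a multiplicative character `χ` of `O_K/𝔤`: the gcd (= ideal sum) of all
nonzero ideals `𝔪` such that `χ(α) = 1` for every `α` with `αO_K` prime to `𝔤` and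
`α ≡ 1 (mod 𝔪)`. -/
noncomputable def charConductor (K : Type*) [Field K] [NumberField K]
    (g : Ideal (𝓞 K)) (χ : MulChar (𝓞 K ⧸ g) ℂ) : Ideal (𝓞 K) :=
  sSup {m : Ideal (𝓞 K) | m ≠ ⊥ ∧ ∀ α : 𝓞 K, IsUnit (Ideal.Quotient.mk g α) →
    α - 1 ∈ m → χ (Ideal.Quotient.mk g α) = 1}

theorem aux_int_mod_pow {R : Type*} [CommRing R] (p : ℕ) (P Q : Ideal R)
    (hcop : IsCoprime P Q) (hsplit : Ideal.span {(p : R)} = P * Q)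
    (hsurj : ∀ a : R, ∃ n : ℤ, a - n ∈ Q) (k : ℕ) (a : R) : ∃ n : ℤ, a - n ∈ Q ^ k := by
  induction k with
  | zero => exact ⟨0, by simp⟩
  | succ k ih =>
    obtain ⟨n, hn⟩ := ih
    have h1 : Q ^ k = Q ^ (k + 1) ⊔ Ideal.span {(p : R) ^ k} := by
      have h2 : Q ⊔ P ^ k = ⊤ := Ideal.isCoprime_iff_sup_eq.mp (hcop.symm.pow_right)
      rw [← Ideal.span_singleton_pow, hsplit, mul_pow, mul_comm (P ^ k), pow_succ, ← Ideal.mul_sup,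
        h2, Ideal.mul_top]
    rw [h1, Submodule.mem_sup] at hn
    obtain ⟨x, hx, y, hy, hxy⟩ := hn
    obtain ⟨b, rfl⟩ := Ideal.mem_span_singleton'.mp hy
    obtain ⟨m, hm⟩ := hsurj b
    refine ⟨n + m * (p : ℤ) ^ k, ?_⟩
    have hpQ : (p : R) ∈ Q := by
      have : (p : R) ∈ P * Q := by
        rw [← hsplit]; exact Ideal.mem_span_singleton_self _
      exact Ideal.mul_le_right this
    have : a - ((n + m * (p : ℤ) ^ k : ℤ) : R) = x + (p : R) ^ k * (b - m) := by
      push_cast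
      linear_combination -hxy
    rw [this, pow_succ]
    exact add_mem (by rwa [← pow_succ]) (Ideal.mul_mem_mul (Ideal.pow_mem_pow hpQ k) hm)

set_option maxHeartbeats 1000000 in
theorem aux_le (K : Type*) [Field K] [NumberField K]
    (h2 : Module.finrank ℚ K = 2)
    (p : ℕ) (hp : p.Prime) (P Q : Ideal (𝓞 K)) (hP : P.IsPrime) (hQ : Q.IsPrime)
    (hPQ : P ≠ Q) (hsplit : Ideal.span {(p : 𝓞 K)} = P * Q)
    (r : ℕ) (hr : 1 ≤ r) (g : Ideal (𝓞 K)) (hg : g = Ideal.span {(p : 𝓞 K) ^ r})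
    (χ : MulChar (𝓞 K ⧸ g) ℂ) (hχ : χ ≠ 1)
    (htriv : ∀ n : ℤ, IsUnit (Ideal.Quotient.mk g (n : 𝓞 K)) →
      χ (Ideal.Quotient.mk g (n : 𝓞 K)) = 1) :
    P ∣ charConductor K g χ := by
  rw [Ideal.dvd_iff_le]
  refine sSup_le ?_
  rintro m ⟨-, hm⟩
  by_contra hmP
  apply hχ
  have hp0 : (p : 𝓞 K) ≠ 0 := by exact_mod_cast hp.ne_zero
  have hPQ0 : P * Q ≠ ⊥ := by
    rw [← hsplit]; simpa using hp.ne_zero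
  have hP0 : P ≠ ⊥ := by rintro rfl; simp at hPQ0
  have hQ0 : Q ≠ ⊥ := by rintro rfl; simp at hPQ0
  have hPM : P.IsMaximal := hP.isMaximal hP0
  have hQM : Q.IsMaximal := hQ.isMaximal hQ0
  have hcop : IsCoprime P Q := by
    rw [Ideal.isCoprime_iff_sup_eq]
    exact hPM.coprime_of_ne hQM hPQ
  have hcopm : IsCoprime P m := by
    rw [Ideal.isCoprime_iff_sup_eq]
    exact hPM.1.2 _ (lt_of_le_of_ne le_sup_left
      (fun h => hmP (le_sup_right.trans h.ge)))
  have hnorm : Ideal.absNorm Q = p := by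
    have h := congrArg Ideal.absNorm hsplit
    have hN : Ideal.absNorm (Ideal.span {(p : 𝓞 K)}) = p ^ 2 := by
      rw [Ideal.absNorm_span_natCast, RingOfIntegers.rank, h2]
    rw [hN, map_mul] at h
    exact ((Nat.Prime.mul_eq_prime_sq_iff hp
      (fun h => hP.ne_top (Ideal.absNorm_eq_one_iff.mp h))
      (fun h => hQ.ne_top (Ideal.absNorm_eq_one_iff.mp h))).mp h.symm).2
  have hsurj : ∀ a : 𝓞 K, ∃ n : ℤ, a - n ∈ Q := by
    intro a
    have : Fact p.Prime := ⟨hp⟩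
    have hc : Nat.card (𝓞 K ⧸ Q) = p := hnorm
    have h1 : (1 : 𝓞 K ⧸ Q) ≠ 0 := one_ne_zero
    have := mem_zmultiples_of_prime_card hc h1 (g' := Ideal.Quotient.mk Q a)
    obtain ⟨n, hn⟩ := AddSubgroup.mem_zmultiples_iff.mp this
    refine ⟨n, ?_⟩
    rw [← Ideal.Quotient.eq, ← hn]
    simp
  have hgPQ : g = P ^ r * Q ^ r := by
    rw [hg, ← Ideal.span_singleton_pow, hsplit, mul_pow]
  have hgP : g ≤ P ^ r := hgPQ.le.trans Ideal.mul_le_left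
  have hgQ : g ≤ Q ^ r := hgPQ.le.trans Ideal.mul_le_right
  have hQr : Q ^ r ≤ Q := Ideal.pow_le_self (by omega)
  have hpg : (p : 𝓞 K) ^ r ∈ g := by
    rw [hg]; exact Ideal.mem_span_singleton_self _
  ext u
  rw [MulChar.one_apply_coe]
  obtain ⟨a, ha⟩ := Ideal.Quotient.mk_surjective (u : 𝓞 K ⧸ g)
  have hau : IsUnit (Ideal.Quotient.mk g a) := ha ▸ u.isUnit
  rw [← ha]
  obtain ⟨n, hn⟩ := aux_int_mod_pow p P Q hcop hsplit hsurj r a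
  have hpn : ¬ (p : ℤ) ∣ n := by
    rintro ⟨c, rfl⟩
    have hpQ : (p : 𝓞 K) ∈ Q := Ideal.mul_le_right (by
      rw [← hsplit]; exact Ideal.mem_span_singleton_self _ : (p : 𝓞 K) ∈ P * Q)
    have haQ : a ∈ Q := by
      have h := add_mem (hQr hn) (Q.mul_mem_right (c : 𝓞 K) hpQ)
      push_cast at h
      simpa using h
    obtain ⟨b', hb⟩ := hau.exists_right_inv
    obtain ⟨b, rfl⟩ := Ideal.Quotient.mk_surjective b'
    rw [← map_mul, ← map_one (Ideal.Quotient.mk g), Ideal.Quotient.eq] at hb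
    have h1 := sub_mem (Q.mul_mem_right b haQ) (hQr (hgQ hb))
    rw [sub_sub_cancel] at h1
    exact hQ.ne_top ((Ideal.eq_top_iff_one _).mpr h1)
  have hcn : IsCoprime n ((p : ℤ) ^ r) :=
    (((Nat.prime_iff_prime_int.mp hp).coprime_iff_not_dvd.mpr hpn).symm).pow_right
  obtain ⟨s, t, hst⟩ := hcn
  have hst' : (s : 𝓞 K) * n + t * (p : 𝓞 K) ^ r = 1 := by exact_mod_cast hst
  have hcr : IsCoprime (P ^ r) (m * Q ^ r) :=
    IsCoprime.pow_left (hcopm.mul_right hcop.pow_right)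
  obtain ⟨x, hx, y, hy, hxy⟩ := Submodule.mem_sup.mp
    ((Ideal.eq_top_iff_one _).mp (Ideal.isCoprime_iff_sup_eq.mp hcr))
  -- c is congruent to a * s mod P ^ r and to 1 mod m * Q ^ r
  obtain ⟨c, hc⟩ : ∃ c, c = a * s * y + x := ⟨_, rfl⟩
  have hc1 : c - a * s ∈ P ^ r := by
    have : c - a * s = (1 - a * s) * x := by rw [hc]; linear_combination (a * s) * hxy
    rw [this]; exact Ideal.mul_mem_left _ _ hx
  have hc2 : c - 1 ∈ m * Q ^ r := by
    have : c - 1 = (a * s - 1) * y := by rw [hc]; linear_combination hxy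
    rw [this]; exact Ideal.mul_mem_left _ _ hy
  have hcna : c * n - a ∈ g := by
    rw [hgPQ, Ideal.mul_eq_inf_of_coprime
      (Ideal.isCoprime_iff_sup_eq.mp (IsCoprime.pow hcop))]
    constructor
    · have : c * n - a = (c - a * s) * n - a * t * (p : 𝓞 K) ^ r := by
        linear_combination a * hst'
      rw [this]
      exact sub_mem (Ideal.mul_mem_right _ _ hc1) (Ideal.mul_mem_left _ _ (hgP hpg))
    · have : c * n - a = (c - 1) * n - (a - n) := by ring
      rw [this]
      exact sub_mem (Ideal.mul_mem_right _ _ (Ideal.mul_le_right hc2)) hn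
  have heq : Ideal.Quotient.mk g a = Ideal.Quotient.mk g c * Ideal.Quotient.mk g (n : 𝓞 K) := by
    rw [← map_mul]; exact (Ideal.Quotient.eq.mpr hcna).symm
  have hu := hau
  rw [heq, IsUnit.mul_iff] at hu
  rw [heq, map_mul, hm c hu.1 (Ideal.mul_le_left hc2), htriv n hu.2, one_mul]

theorem conductor_divisible_by_both_primes (K : Type*) [Field K] [NumberField K]
    (h2 : Module.finrank ℚ K = 2)
    (him : ∀ v : InfinitePlace K, v.IsComplex)
    (p : ℕ) (hp : p.Prime) (P Q : Ideal (𝓞 K)) (hP : P.IsPrime) (hQ : Q.IsPrime)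
    (hPQ : P ≠ Q) (hsplit : Ideal.span {(p : 𝓞 K)} = P * Q)
    (r : ℕ) (hr : 1 ≤ r) (g : Ideal (𝓞 K)) (hg : g = Ideal.span {(p : 𝓞 K) ^ r})
    (χ : MulChar (𝓞 K ⧸ g) ℂ) (hχ : χ ≠ 1)
    (htriv : ∀ n : ℤ, IsUnit (Ideal.Quotient.mk g (n : 𝓞 K)) → χ (Ideal.Quotient.mk g (n : 𝓞 K)) = 1) :
    P ∣ charConductor K g χ ∧ Q ∣ charConductor K g χ := by
  exact ⟨aux_le K h2 p hp P Q hP hQ hPQ hsplit r hr g hg χ hχ htriv,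
    aux_le K h2 p hp Q P hQ hP hPQ.symm (by rw [hsplit, mul_comm]) r hr g hg χ hχ htriv⟩
end

section
/- Let K be an imaginary quadratic field of discriminant d_K, p a prime, r ≥ 1, 𝔤 = p^r O_K, and π_𝔤 : O_K → O_K/𝔤 the projection. Then the subgroup π_𝔤(O_K^×)·π_𝔤(Z)^× of (O_K/𝔤)^× has order (|O_K^×|/2) · p^{r-1} (p-1). -/
open NumberField

/-- The subgroup `π_𝔤(O_K^×)·π_𝔤(ℤ)^×` of `(O_K/𝔤)^×`: generated by the images of the
units of `O_K` and the images of rational integers (that are units mod `𝔤`). -/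
def unitsIntSubgroup (K : Type*) [Field K] [NumberField K] (g : Ideal (𝓞 K)) :
    Subgroup (𝓞 K ⧸ g)ˣ :=
  Subgroup.closure
    (Set.range (Units.map (Ideal.Quotient.mk g : 𝓞 K →+* 𝓞 K ⧸ g).toMonoidHom) ∪
      {u : (𝓞 K ⧸ g)ˣ | ∃ n : ℤ, (u : 𝓞 K ⧸ g) = Ideal.Quotient.mk g (n : 𝓞 K)})


section helpers

variable {K : Type*} [Field K] [NumberField K]

open scoped Classical in
lemma aux_embeddings (h2 : Module.finrank ℚ K = 2)
    (him : ∀ v : InfinitePlace K, v.IsComplex) :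
    ∃ φ ψ : K →ₐ[ℚ] ℂ, (∀ x, ψ x = (starRingEnd ℂ) (φ x)) ∧ φ ≠ ψ ∧
      (Finset.univ : Finset (K →ₐ[ℚ] ℂ)) = {φ, ψ} := by
  classical
  obtain ⟨v⟩ : Nonempty (InfinitePlace K) := inferInstance
  have hv := InfinitePlace.isComplex_iff.1 (him v)
  let φ : K →ₐ[ℚ] ℂ := v.embedding.toRatAlgHom
  let ψ : K →ₐ[ℚ] ℂ := (ComplexEmbedding.conjugate v.embedding).toRatAlgHom
  have hne : φ ≠ ψ := by
    intro h
    apply hv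
    rw [ComplexEmbedding.isReal_iff]
    ext x
    exact (DFunLike.congr_fun h x).symm
  refine ⟨φ, ψ, fun x => rfl, hne, ?_⟩
  symm
  apply Finset.eq_univ_of_card
  rw [Finset.card_pair hne, AlgHom.card, h2]

lemma aux_dvd (h2 : Module.finrank ℚ K = 2) (m n : ℤ) :
    ((m : 𝓞 K) ∣ (n : 𝓞 K)) ↔ m ∣ n := by
  constructor
  · rintro ⟨x, hx⟩
    have h := congrArg (Algebra.norm ℤ) hx
    have e : ∀ k : ℤ, Algebra.norm ℤ (k : 𝓞 K) = k ^ 2 := by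
      intro k
      have := Algebra.norm_algebraMap (S := 𝓞 K) k
      rw [RingOfIntegers.rank, h2] at this
      simpa using this
    rw [map_mul, e, e] at h
    exact (Int.pow_dvd_pow_iff two_ne_zero).1 ⟨_, h⟩
  · rintro ⟨x, rfl⟩
    exact ⟨x, by push_cast; rfl⟩

lemma aux_unit (h2 : Module.finrank ℚ K = 2)
    (him : ∀ v : InfinitePlace K, v.IsComplex) (m : ℤ) (hm : 2 < m)
    (u : (𝓞 K)ˣ) (n : ℤ) (x : 𝓞 K) (hu : (u : 𝓞 K) = n + m * x) : u = 1 ∨ u = -1 := by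
  classical
  obtain ⟨φ, ψ, hψ, hne, huniv⟩ := aux_embeddings h2 him
  have hT : ∀ y : 𝓞 K, ((Algebra.trace ℤ (𝓞 K) y : ℤ) : ℂ) = φ y + (starRingEnd ℂ) (φ y) := by
    intro y
    have := (trace_eq_sum_embeddings (K := ℚ) (L := K) (x := (y : K)) (E := ℂ))
    rw [huniv, Finset.sum_pair hne, hψ, ← Algebra.coe_trace_int] at this
    simpa using this
  have hN : ∀ y : 𝓞 K, ((Algebra.norm ℤ y : ℤ) : ℂ) = φ y * (starRingEnd ℂ) (φ y) := by
    intro y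
    have := Algebra.norm_eq_prod_embeddings ℚ ℂ (y : K)
    rw [huniv, Finset.prod_pair hne, hψ, ← Algebra.coe_norm_int] at this
    simpa using this
  have hT' : ∀ y : 𝓞 K, ((Algebra.trace ℤ (𝓞 K) y : ℤ) : ℝ) = 2 * (φ y).re := by
    intro y
    have := congrArg Complex.re (hT y)
    simp at this
    linarith
  have hN' : ∀ y : 𝓞 K, ((Algebra.norm ℤ y : ℤ) : ℝ) = (φ y).re ^ 2 + (φ y).im ^ 2 := by
    intro y
    have := congrArg Complex.re (hN y)
    simp at this
    linarith
  have hu1 : (φ u).re ^ 2 + (φ u).im ^ 2 = 1 := by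
    have h := hN' u
    have hunit : IsUnit (Algebra.norm ℤ (u : 𝓞 K)) := u.isUnit.map _
    rcases Int.isUnit_iff.1 hunit with h1 | h1
    · rw [h1] at h; simpa using h.symm
    · rw [h1] at h
      push_cast at h
      nlinarith [sq_nonneg (φ u).re, sq_nonneg (φ u).im]
  have him' : (φ u).im = m * (φ x).im := by
    rw [hu]; simp
  set d : ℤ := 4 * Algebra.norm ℤ x - (Algebra.trace ℤ (𝓞 K) x) ^ 2 with hd
  have hd' : (d : ℝ) = 4 * (φ x).im ^ 2 := by
    rw [hd]; push_cast; rw [hT', hN']; ring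
  have hle : m ^ 2 * d ≤ 4 := by
    have : ((m ^ 2 * d : ℤ) : ℝ) ≤ (4 : ℤ) := by
      push_cast
      rw [hd']
      rw [him'] at hu1
      nlinarith [sq_nonneg (φ u).re]
    exact_mod_cast this
  have hd0 : d = 0 := by
    have h0 : 0 ≤ d := by
      have : (0 : ℝ) ≤ d := by rw [hd']; positivity
      exact_mod_cast this
    by_contra hne
    have : 1 ≤ d := by omega
    nlinarith
  have hx0 : (φ x).im = 0 := by
    rw [hd0] at hd'
    have : (φ x).im ^ 2 = 0 := by push_cast at hd'; linarith
    exact pow_eq_zero_iff two_ne_zero |>.1 this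
  have hui : (φ u).im = 0 := by rw [him', hx0, mul_zero]
  rw [hui] at hu1
  have hre : (φ u).re = 1 ∨ (φ u).re = -1 := by
    have h3 : ((φ u).re - 1) * ((φ u).re + 1) = 0 := by linear_combination hu1
    rcases mul_eq_zero.1 h3 with h | h
    · left; linarith
    · right; linarith
  have key : ∀ w : (𝓞 K)ˣ, φ u = φ w → u = w := by
    intro w h
    have := φ.injective h
    exact Units.ext (RingOfIntegers.ext this)
  rcases hre with h | h
  · left; apply key; apply Complex.ext <;> simp [h, hui]
  · right; apply key; apply Complex.ext <;> simp [h, hui]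

end helpers

theorem card_units_int_subgroup (K : Type*) [Field K] [NumberField K]
    (h2 : Module.finrank ℚ K = 2)
    (him : ∀ v : InfinitePlace K, v.IsComplex)
    (p : ℕ) (hp : p.Prime) (r : ℕ) (hr : 1 ≤ r) (hpr : 2 < p ^ r)
    (g : Ideal (𝓞 K)) (hg : g = Ideal.span {(p : 𝓞 K) ^ r}) :
    Nat.card (unitsIntSubgroup K g)
      = (Nat.card (𝓞 K)ˣ / 2) * p ^ (r - 1) * (p - 1) := by
  set m : ℕ := p ^ r with hm
  have hmem : ∀ x : 𝓞 K, x ∈ g ↔ ((m : ℤ) : 𝓞 K) ∣ x := by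
    intro x
    rw [hg, Ideal.mem_span_singleton, hm]; push_cast; rfl
  have : CharP (𝓞 K ⧸ g) m := ⟨fun n => by
    have : ((n : ℕ) : 𝓞 K ⧸ g) = Ideal.Quotient.mk g ((n : ℤ) : 𝓞 K) := by simp
    rw [this, Ideal.Quotient.eq_zero_iff_mem, hmem, aux_dvd h2, Int.natCast_dvd_natCast]⟩
  have : NeZero m := ⟨by omega⟩
  let c : ZMod m →+* 𝓞 K ⧸ g := ZMod.castHom dvd_rfl _
  have hcinj : Function.Injective c := ZMod.castHom_injective _
  let f : (𝓞 K)ˣ →* (𝓞 K ⧸ g)ˣ :=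
    Units.map (Ideal.Quotient.mk g : 𝓞 K →+* 𝓞 K ⧸ g).toMonoidHom
  let cu : (ZMod m)ˣ →* (𝓞 K ⧸ g)ˣ := Units.map c.toMonoidHom
  have hcuinj : Function.Injective cu := Units.map_injective hcinj
  have hcint : ∀ n : ℤ, c n = Ideal.Quotient.mk g (n : 𝓞 K) := by
    intro n; simp
  let F : (𝓞 K)ˣ × (ZMod m)ˣ →* (𝓞 K ⧸ g)ˣ := f.coprod cu
  have hFr : F.range = unitsIntSubgroup K g := by
    have hr2 : (cu.range : Set (𝓞 K ⧸ g)ˣ) =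
        {u : (𝓞 K ⧸ g)ˣ | ∃ n : ℤ, (u : 𝓞 K ⧸ g) = Ideal.Quotient.mk g (n : 𝓞 K)} := by
      ext u
      constructor
      · rintro ⟨z, rfl⟩
        obtain ⟨n, hn⟩ := ZMod.intCast_surjective (z : ZMod m)
        refine ⟨n, ?_⟩
        rw [← hcint, hn]; rfl
      · rintro ⟨n, hn⟩
        have hcop : IsUnit (n : ZMod m) := by
          rw [isUnit_iff_mem_nonZeroDivisors_of_finite, mem_nonZeroDivisors_iff_right]
          intro z hz
          apply hcinj
          have hz' := congrArg c hz
          rw [map_mul, hcint, ← hn, map_zero, Units.mul_left_eq_zero] at hz'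
          rw [hz', map_zero]
        refine ⟨hcop.unit, Units.ext ?_⟩
        rw [hn, ← hcint]; rfl
    have hr1 : Set.range (Units.map (Ideal.Quotient.mk g : 𝓞 K →+* 𝓞 K ⧸ g).toMonoidHom)
        = (f.range : Set (𝓞 K ⧸ g)ˣ) := rfl
    rw [unitsIntSubgroup, ← hr2, hr1, Subgroup.closure_union, Subgroup.closure_eq,
      Subgroup.closure_eq]
    ext u
    rw [Subgroup.mem_sup]
    constructor
    · rintro ⟨⟨a, b⟩, rfl⟩
      exact ⟨f a, ⟨a, rfl⟩, cu b, ⟨b, rfl⟩, rfl⟩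
    · rintro ⟨_, ⟨a, rfl⟩, _, ⟨b, rfl⟩, rfl⟩
      exact ⟨(a, b), rfl⟩
  have hf1 : f (-1) = -1 := Units.ext (by simp [f])
  have hcu1 : cu (-1) = -1 := Units.ext (by simp [cu])
  have hker : (F.ker : Set ((𝓞 K)ˣ × (ZMod m)ˣ)) = {((1, 1) : (𝓞 K)ˣ × (ZMod m)ˣ), (-1, -1)} := by
    ext ⟨a, b⟩
    simp only [SetLike.mem_coe, MonoidHom.mem_ker, Set.mem_insert_iff, Set.mem_singleton_iff,
      Prod.mk.injEq]
    have hF : F (a, b) = f a * cu b := rfl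
    rw [hF]
    constructor
    · intro h
      have ha : a = 1 ∨ a = -1 := by
        obtain ⟨n, hn⟩ := ZMod.intCast_surjective ((b⁻¹ : (ZMod m)ˣ) : ZMod m)
        have h1 : f a = cu b⁻¹ := by rw [map_inv]; exact eq_inv_of_mul_eq_one_left h
        have h3 : Ideal.Quotient.mk g (a : 𝓞 K) = Ideal.Quotient.mk g (n : 𝓞 K) := by
          rw [← hcint, hn]
          exact congrArg Units.val h1
        rw [Ideal.Quotient.eq, hmem] at h3
        obtain ⟨x, hx⟩ := h3
        exact aux_unit h2 him m (by exact_mod_cast hpr) a n x (by rw [← hx]; ring)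
      rcases ha with rfl | rfl
      · left
        refine ⟨rfl, hcuinj ?_⟩
        simpa using h
      · right
        refine ⟨rfl, hcuinj ?_⟩
        rw [hf1] at h
        rw [hcu1]
        simpa [neg_eq_iff_eq_neg] using h
    · rintro (⟨rfl, rfl⟩ | ⟨rfl, rfl⟩)
      · simp
      · rw [hf1, hcu1]; simp
  have hneg : (1 : (𝓞 K)ˣ) ≠ -1 := by
    intro h
    have := congrArg (fun u : (𝓞 K)ˣ => (u : 𝓞 K)) h
    simp only [Units.val_one, Units.val_neg] at this
    have h3 : (2 : 𝓞 K) = 0 := by linear_combination this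
    exact two_ne_zero h3
  have hkc : Nat.card F.ker = 2 := by
    have : Nat.card F.ker = (F.ker : Set ((𝓞 K)ˣ × (ZMod m)ˣ)).ncard := rfl
    rw [this, hker, Set.ncard_pair]
    intro h
    exact hneg (Prod.ext_iff.1 h).1
  have hmain := F.ker.card_mul_index
  rw [Subgroup.index_ker, hFr, hkc, Nat.card_prod, Nat.card_eq_fintype_card (α := (ZMod m)ˣ),
    ZMod.card_units_eq_totient, hm, Nat.totient_prime_pow hp (by omega)] at hmain
  obtain ⟨k, hk⟩ : 2 ∣ Nat.card (𝓞 K)ˣ := by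
    have : orderOf (-1 : (𝓞 K)ˣ) = 2 := orderOf_eq_prime (by simp) hneg.symm
    rw [← this]
    exact orderOf_dvd_natCard _
  rw [hk] at hmain ⊢
  rw [Nat.mul_div_cancel_left _ two_pos]
  nlinarith
end

section
/- Let K be an imaginary quadratic field of discriminant d_K, p a prime, r ≥ 1, and 𝔤 = p^r O_K. Then the quotient group G = (O_K/𝔤)^× / (π_𝔤(O_K^×)·π_𝔤(Z)^×) has order (2 p^{r-1} / |O_K^×|) · (p - (d_K/p)). -/
open NumberField

/-- The Kronecker symbol `(d/p)` for a prime `p`. -/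
def kroneckerSym (d : ℤ) (p : ℕ) : ℤ :=
  if p = 2 then
    (if d % 2 = 0 then 0 else if d % 8 = 1 ∨ d % 8 = 7 then 1 else -1)
  else jacobiSym d p

theorem aux_fiber {A B : Type*} [AddCommGroup A] [AddCommGroup B] [Finite A] (f : A →+ B)
    (hf : Function.Surjective f) (P : B → Prop) :
    Nat.card {a // P (f a)} * Nat.card B = Nat.card A * Nat.card {b // P b} := by
  have key : ∀ P : B → Prop, Nat.card {a // P (f a)} = Nat.card f.ker * Nat.card {b // P b} := by
    intro P
    obtain ⟨s, hs⟩ := hf.hasRightInverse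
    rw [← Nat.card_prod]
    refine Nat.card_congr ⟨fun a => (⟨a.1 - s (f a.1), ?_⟩, ⟨f a.1, a.2⟩),
      fun x => ⟨x.1.1 + s x.2.1, ?_⟩, ?_, ?_⟩
    · simp [AddMonoidHom.mem_ker, hs (f a.1)]
    · have := x.1.2
      rw [AddMonoidHom.mem_ker] at this
      simpa [this, hs x.2.1] using x.2.2
    · intro a
      simp
    · rintro ⟨⟨x, hx⟩, ⟨y, hy⟩⟩
      rw [AddMonoidHom.mem_ker] at hx
      simp [hx, hs y]
  have h1 := key (fun _ => True)
  have h2 := key P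
  simp at h1
  have hA : Nat.card {a : A // True} = Nat.card A := Nat.card_congr (Equiv.subtypeUnivEquiv (fun _ => trivial))
  have hB : Nat.card {a : B // True} = Nat.card B := Nat.card_congr (Equiv.subtypeUnivEquiv (fun _ => trivial))
  rw [h2]
  have h1 : Nat.card A = Nat.card f.ker * Nat.card B := by
    rw [← hA, ← hB]; exact key (fun _ => True)
  rw [h1]; ring

theorem aux_two : (2 : ZMod 2) = 0 := by decide

theorem aux_dec0 (c : ZMod 2) :
    (Finset.univ.filter (fun x : ZMod 2 => x ^ 2 + 0 * x - c = 0)).card = 1 := by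
  revert c; decide

theorem aux_dec1 :
    (Finset.univ.filter (fun x : ZMod 2 => x ^ 2 + (0 + 1) * x - 0 = 0)).card = 2 := by
  decide

theorem aux_dec2 :
    (Finset.univ.filter (fun x : ZMod 2 => x ^ 2 + (0 + 1) * x - (0 + 1) = 0)).card = 0 := by
  decide

theorem aux_roots (p : ℕ) [Fact p.Prime] (c t : ℤ) :
    (((Finset.univ.filter (fun x : ZMod p => x ^ 2 + t * x - c = 0)).card : ℕ) : ℤ)
      = 1 + kroneckerSym (t ^ 2 + 4 * c) p := by
  by_cases h : p = 2
  · subst h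
    have h2 := aux_two
    unfold kroneckerSym
    rcases Int.even_or_odd' t with ⟨k, rfl | rfl⟩
    · have e : ((2 * k) ^ 2 + 4 * c) % 2 = 0 := by ring_nf; omega
      simp only [e, if_true]
      push_cast
      have := aux_dec0 c
      simp only [h2, zero_mul] at this ⊢
      rw [this]; rfl
    · obtain ⟨m, hm⟩ := Int.even_mul_succ_self k
      have e : (2 * k + 1) ^ 2 + 4 * c = 8 * m + 1 + 4 * c := by linarith
      rw [e]
      rcases Int.even_or_odd' c with ⟨l, rfl | rfl⟩
      · rw [if_pos rfl, if_neg (by omega), if_pos (by omega)]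
        push_cast
        simp only [h2, zero_mul]
        rw [aux_dec1]; rfl
      · rw [if_pos rfl, if_neg (by omega), if_neg (by omega)]
        push_cast
        simp only [h2, zero_mul]
        rw [aux_dec2]; rfl
  · unfold kroneckerSym
    rw [if_neg h, ← jacobiSym.legendreSym.to_jacobiSym, add_comm, ← legendreSym.card_sqrts p h]
    have h20 : (2 : ZMod p) ≠ 0 := by
      intro h0
      have : ((2:ℕ) : ZMod p) = 0 := by exact_mod_cast h0
      rw [ZMod.natCast_eq_zero_iff] at this
      exact h ((Nat.prime_dvd_prime_iff_eq Fact.out Nat.prime_two).1 this)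
    norm_cast
    refine Finset.card_bij (fun x _ => 2 * x + t) ?_ ?_ ?_
    · intro x hx
      simp at hx ⊢
      linear_combination 4 * hx
    · intro x _ y _ hxy
      exact mul_left_cancel₀ h20 (add_right_cancel hxy)
    · intro y hy
      simp at hy
      refine ⟨(y - t) / 2, ?_, ?_⟩
      · simp
        field_simp
        linear_combination hy
      · field_simp
        ring

theorem aux_count (p : ℕ) [Fact p.Prime] (c t : ℤ) :
    ((Nat.card {z : ZMod p × ZMod p // z.1 ^ 2 + t * z.1 * z.2 - c * z.2 ^ 2 ≠ 0} : ℕ) : ℤ)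
      = (p - 1) * (p - kroneckerSym (t ^ 2 + 4 * c) p) := by
  have hz : (((Finset.univ.filter (fun z : ZMod p × ZMod p => z.1 ^ 2 + t * z.1 * z.2 - c * z.2 ^ 2 = 0)).card : ℕ) : ℤ)
      = 1 + (p - 1) * (1 + kroneckerSym (t ^ 2 + 4 * c) p) := by
    rw [← aux_roots]
    rw [Finset.card_filter, Fintype.sum_prod_type_right]
    simp_rw [← Finset.card_filter]
    rw [← Finset.add_sum_erase _ _ (Finset.mem_univ (0 : ZMod p))]
    rw [Finset.sum_congr rfl (g := fun _ => (Finset.univ.filter (fun x : ZMod p => x ^ 2 + t * x - c = 0)).card)]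
    · have hp := (Fact.out : p.Prime).one_le
      have : ((Finset.univ : Finset (ZMod p)).filter (fun x => x = 0)).card = 1 := by
        rw [Finset.filter_eq']; simp
      simp [Finset.card_erase_of_mem, ZMod.card, this, Nat.cast_sub hp]
    · intro b hb
      have hb : b ≠ 0 := by simpa using hb
      symm
      refine Finset.card_bij (fun x _ => x * b) ?_ ?_ ?_
      · intro x hx
        simp at hx ⊢
        linear_combination b ^ 2 * hx
      · intro x _ y _ hxy
        exact mul_right_cancel₀ hb hxy
      · intro y hy
        simp at hy
        refine ⟨y / b, ?_, by field_simp⟩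
        simp
        field_simp
        linear_combination hy
  have hs := Finset.card_filter_add_card_filter_not (s := (Finset.univ : Finset (ZMod p × ZMod p))) 
    (fun z : ZMod p × ZMod p => z.1 ^ 2 + t * z.1 * z.2 - c * z.2 ^ 2 = 0)
  rw [Nat.card_eq_fintype_card, Fintype.card_subtype]
  rw [Finset.card_univ, Fintype.card_prod, ZMod.card] at hs
  have hs' := congrArg (Nat.cast : ℕ → ℤ) hs
  push_cast at hs'
  rw [hz] at hs'
  linarith

theorem aux_isUnit (p : ℕ) [Fact p.Prime] (r : ℕ) (hr : 1 ≤ r) (x : ZMod (p ^ r)) :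
    IsUnit x ↔ ZMod.castHom (dvd_pow_self p (by omega : r ≠ 0)) (ZMod p) x ≠ 0 := by
  have : NeZero (p ^ r) := ⟨pow_ne_zero _ (Fact.out : p.Prime).ne_zero⟩
  obtain ⟨n, rfl⟩ := ZMod.natCast_zmod_surjective x
  rw [ZMod.isUnit_iff_coprime, map_natCast, Ne, ZMod.natCast_eq_zero_iff,
    Nat.coprime_pow_right_iff (by omega), Nat.coprime_comm, (Fact.out : p.Prime).coprime_iff_not_dvd]

theorem aux_cardUnits (p : ℕ) [Fact p.Prime] (r : ℕ) (hr : 1 ≤ r) (c t : ℤ) :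
    ((Nat.card (QuadraticAlgebra (ZMod (p ^ r)) c t)ˣ : ℕ) : ℤ)
      = p ^ (2 * (r - 1)) * ((p - 1) * (p - kroneckerSym (t ^ 2 + 4 * c) p)) := by
  have : NeZero (p ^ r) := ⟨pow_ne_zero _ (Fact.out : p.Prime).ne_zero⟩
  let π := ZMod.castHom (dvd_pow_self p (by omega : r ≠ 0)) (ZMod p)
  have hπ : Function.Surjective π := ZMod.castHom_surjective _
  have h1 := aux_fiber (π.toAddMonoidHom.prodMap π.toAddMonoidHom) (hπ.prodMap hπ)
    (fun z => z.1 ^ 2 + t * z.1 * z.2 - c * z.2 ^ 2 ≠ 0)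
  have h2 : Nat.card (QuadraticAlgebra (ZMod (p ^ r)) c t)ˣ = Nat.card {a // (fun z : ZMod p × ZMod p => z.1 ^ 2 + t * z.1 * z.2 - c * z.2 ^ 2 ≠ 0) ((π.toAddMonoidHom.prodMap π.toAddMonoidHom) a)} := by
    rw [Nat.card_congr (Equiv.ofBijective (fun u : (QuadraticAlgebra (ZMod (p ^ r)) c t)ˣ => (⟨u.1, u.isUnit⟩ : {x // IsUnit x})) ⟨fun u v h => Units.ext (congrArg Subtype.val h), fun x => ⟨x.2.unit, rfl⟩⟩)]
    refine Nat.card_congr ((QuadraticAlgebra.equivProd _ _).subtypeEquiv fun z => ?_)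
    rw [QuadraticAlgebra.isUnit_iff_norm_isUnit, aux_isUnit p r hr, QuadraticAlgebra.norm_def]
    simp only [map_sub, map_add, map_mul, map_intCast]
    simp only [QuadraticAlgebra.equivProd, AddMonoidHom.coe_prodMap, Equiv.coe_fn_mk, Prod.map_apply]
    change ¬ (_ = _) ↔ ¬ (_ = _)
    refine not_congr (Eq.congr_left ?_)
    simp only [π, RingHom.toAddMonoidHom_eq_coe, AddMonoidHom.coe_coe]
    ring
  rw [← h2] at h1
  simp only [Nat.card_prod, Nat.card_zmod] at h1
  have h1' := congrArg (Nat.cast : ℕ → ℤ) h1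
  push_cast at h1'
  have h3 := aux_count p c t
  rw [h3] at h1'
  have hp0 : (p : ℤ) * p ≠ 0 := by
    have := (Fact.out : p.Prime).ne_zero
    positivity
  apply mul_right_cancel₀ hp0
  rw [h1']
  obtain ⟨s, rfl⟩ : ∃ s, r = s + 1 := ⟨r - 1, by omega⟩
  simp only [Nat.add_sub_cancel]
  ring


theorem aux_equiv (K : Type*) [Field K] [NumberField K] (h2 : Module.finrank ℚ K = 2) :
    ∃ c t : ℤ, Nonempty (QuadraticAlgebra ℤ c t ≃+* 𝓞 K) := by
  have hfr : Module.finrank ℤ (𝓞 K) = 2 := by rw [RingOfIntegers.rank, h2]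
  let b : Module.Basis (Fin 2) ℤ (𝓞 K) := Module.finBasisOfFinrankEq ℤ (𝓞 K) hfr
  obtain ⟨x, y, hxy⟩ : ∃ x y : ℤ, x • b 0 + y • b 1 = 1 :=
    ⟨b.repr 1 0, b.repr 1 1, by rw [← Fin.sum_univ_two (fun i => b.repr 1 i • b i), b.sum_repr]⟩
  have hcop : IsCoprime x y := by
    rw [Int.isCoprime_iff_gcd_eq_one]
    obtain ⟨x', hx'⟩ := Int.gcd_dvd_left x y
    obtain ⟨y', hy'⟩ := Int.gcd_dvd_right x y
    set d := Int.gcd x y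
    have h1 : (algebraMap ℤ (𝓞 K) d) * (x' • b 0 + y' • b 1) = 1 := by
      rw [← hxy]
      conv_rhs => rw [hx', hy']
      simp only [zsmul_eq_mul, Int.cast_mul, eq_intCast]
      ring
    have h3 := congrArg (Algebra.norm ℤ) h1
    rw [map_mul, Algebra.norm_algebraMap, hfr, sq, mul_assoc] at h3
    rw [map_one (Algebra.norm ℤ)] at h3
    have := Int.isUnit_iff.1 (IsUnit.of_mul_eq_one _ h3)
    omega
  obtain ⟨u, v, huv⟩ := hcop
  let w : 𝓞 K := -v • b 0 + u • b 1
  have huv' : (u : 𝓞 K) * x + v * y = 1 := by exact_mod_cast congrArg (Int.cast : ℤ → 𝓞 K) huv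
  simp only [zsmul_eq_mul] at hxy
  have hw : w = - v * b 0 + u * b 1 := by simp [w]
  have hb0 : b 0 = u - y * w := by rw [hw]; linear_combination (-u : 𝓞 K) * hxy - b 0 * huv' + 2 * u * hxy
  have hb1 : b 1 = v + x * w := by rw [hw]; linear_combination (v : 𝓞 K) * hxy - b 1 * huv'
  have hspan : ∀ z : 𝓞 K, ∃ m n : ℤ, z = m + n * w := by
    intro z
    have hz := b.sum_repr z
    rw [Fin.sum_univ_two] at hz
    refine ⟨b.repr z 0 * u + b.repr z 1 * v, - b.repr z 0 * y + b.repr z 1 * x, ?_⟩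
    conv_lhs => rw [← hz, hb0, hb1]
    simp only [zsmul_eq_mul]
    push_cast
    ring
  obtain ⟨c, t, hct⟩ := hspan (w * w)
  refine ⟨c, t, ⟨?_⟩⟩
  let f : QuadraticAlgebra ℤ c t →ₐ[ℤ] 𝓞 K := QuadraticAlgebra.lift ⟨w, by rw [hct]; simp⟩
  have hf : ∀ z, f z = z.re + z.im * w := by intro z; simp [f, QuadraticAlgebra.lift]
  have hsurj : Function.Surjective f := by
    intro z
    obtain ⟨m, n, rfl⟩ := hspan z
    exact ⟨⟨m, n⟩, by simp [hf]⟩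
  have hinj : Function.Injective f := by
    let e : 𝓞 K ≃ₗ[ℤ] QuadraticAlgebra ℤ c t := b.equiv (QuadraticAlgebra.basis c t) (Equiv.refl _)
    have := OrzechProperty.injective_of_surjective_endomorphism (e.toLinearMap ∘ₗ f.toLinearMap)
      (e.surjective.comp hsurj)
    exact Function.Injective.of_comp (f := e) (g := f) this
  exact (RingEquiv.ofBijective f ⟨hinj, hsurj⟩)

theorem aux_trace (c t : ℤ) (z : QuadraticAlgebra ℤ c t) :
    Algebra.trace ℤ _ z = 2 * z.re + t * z.im := by
  rw [Algebra.trace_eq_matrix_trace (QuadraticAlgebra.basis c t), Matrix.trace_fin_two]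
  simp [Algebra.leftMulMatrix_eq_repr_mul, QuadraticAlgebra.basis]
  ring

theorem aux_discr (K : Type*) [Field K] [NumberField K] (c t : ℤ)
    (e : QuadraticAlgebra ℤ c t ≃+* 𝓞 K) : discr K = t ^ 2 + 4 * c := by
  let e' : QuadraticAlgebra ℤ c t ≃ₐ[ℤ] 𝓞 K := AlgEquiv.ofRingEquiv (f := e) (by intro; simp)
  rw [← discr_eq_discr K ((QuadraticAlgebra.basis c t).map e'.toLinearEquiv), Algebra.discr]
  have : Algebra.traceMatrix ℤ ⇑((QuadraticAlgebra.basis c t).map e'.toLinearEquiv) = Algebra.traceMatrix ℤ (QuadraticAlgebra.basis c t) := by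
    ext i j
    simp only [Algebra.traceMatrix_apply, Algebra.traceForm_apply, Module.Basis.map_apply, AlgEquiv.toLinearEquiv_apply, ← map_mul]
    exact Algebra.trace_eq_of_algEquiv e' _
  rw [this, Matrix.det_fin_two]
  simp [Algebra.traceMatrix_apply, Algebra.traceForm_apply, aux_trace, QuadraticAlgebra.basis]
  ring

theorem aux_neg (K : Type*) [Field K] [NumberField K]
    (h2 : Module.finrank ℚ K = 2)
    (him : ∀ v : InfinitePlace K, v.IsComplex) : discr K < 0 := by
  have : IsTotallyComplex K := ⟨him⟩
  have h := IsTotallyComplex.finrank (K := K)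
  have h1 : InfinitePlace.nrComplexPlaces K = 1 := by omega
  have hs := sign_discr (K := K)
  rw [h1] at hs
  exact Int.sign_eq_neg_one_iff_neg.1 (by simpa using hs)

theorem aux_unit_s9 (c t : ℤ) (hd : t ^ 2 + 4 * c < 0) (u : QuadraticAlgebra ℤ c t) (hu : IsUnit u)
    (N : ℤ) (hN : 2 ≤ N) (h : N ∣ u.im) : u = 1 ∨ u = -1 := by
  rw [QuadraticAlgebra.isUnit_iff_norm_isUnit, Int.isUnit_iff, QuadraticAlgebra.norm_def] at hu
  have hd3 : t ^ 2 + 4 * c ≤ -3 := by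
    rcases Int.even_or_odd' t with ⟨k, rfl | rfl⟩ <;> ring_nf at hd ⊢ <;> omega
  have him : u.im = 0 := by
    by_contra h0
    have h1 : 2 ≤ |u.im| := hN.trans (Int.le_of_dvd (abs_pos.2 h0) ((dvd_abs _ _).2 h))
    have h2 : 4 ≤ u.im ^ 2 := by rw [← sq_abs]; nlinarith
    rcases hu with hu | hu <;> nlinarith [sq_nonneg (2 * u.re + t * u.im)]
  rw [him] at hu
  have : u.re * u.re = 1 := by
    rcases hu with hu | hu
    · linarith
    · nlinarith [sq_nonneg u.re]
  rcases mul_self_eq_one_iff.1 this with h | h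
  · left; ext <;> simp [h, him, QuadraticAlgebra.re_one, QuadraticAlgebra.im_one]
  · right; ext <;> simp [h, him, QuadraticAlgebra.re_one, QuadraticAlgebra.im_one]

/-- Reduction of `QuadraticAlgebra ℤ c t` modulo `N`. -/
def auxRed (c t : ℤ) (N : ℕ) :
    QuadraticAlgebra ℤ c t →+* QuadraticAlgebra (ZMod N) c t where
  toFun z := ⟨z.re, z.im⟩
  map_one' := by ext <;> simp [QuadraticAlgebra.re_one, QuadraticAlgebra.im_one]
  map_zero' := by ext <;> simp
  map_add' x y := by ext <;> simp
  map_mul' x y := by ext <;> simp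

theorem auxRed_surjective (c t : ℤ) (N : ℕ) : Function.Surjective (auxRed c t N) := by
  rintro ⟨x, y⟩
  obtain ⟨x, rfl⟩ := ZMod.intCast_surjective x
  obtain ⟨y, rfl⟩ := ZMod.intCast_surjective y
  exact ⟨⟨x, y⟩, rfl⟩

theorem auxRed_ker (c t : ℤ) (N : ℕ) (z : QuadraticAlgebra ℤ c t) :
    auxRed c t N z = 0 ↔ (N : QuadraticAlgebra ℤ c t) ∣ z := by
  have h : (N : QuadraticAlgebra ℤ c t) = algebraMap ℤ _ (N : ℤ) := by simp
  rw [h, QuadraticAlgebra.algebraMap_dvd_iff, ← ZMod.intCast_zmod_eq_zero_iff_dvd, ← ZMod.intCast_zmod_eq_zero_iff_dvd]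
  rw [QuadraticAlgebra.ext_iff]
  rfl

theorem card_quotient_group_formula (K : Type*) [Field K] [NumberField K]
    (h2 : Module.finrank ℚ K = 2)
    (him : ∀ v : InfinitePlace K, v.IsComplex)
    (p : ℕ) (hp : p.Prime) (r : ℕ) (hr : 1 ≤ r)
    (g : Ideal (𝓞 K)) (hg : g = Ideal.span {(p : 𝓞 K) ^ r}) :
    (Nat.card ((𝓞 K ⧸ g)ˣ ⧸ unitsIntSubgroup K g) : ℤ) * (Nat.card (𝓞 K)ˣ : ℤ)
      = 2 * (p : ℤ) ^ (r - 1) * ((p : ℤ) - kroneckerSym (discr K) p) := by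
  have : Fact p.Prime := ⟨hp⟩
  obtain ⟨c, t, ⟨e⟩⟩ := aux_equiv K h2
  have hd := aux_neg K h2 him
  rw [aux_discr K c t e] at hd ⊢
  have hN0 : NeZero (p ^ r) := ⟨pow_ne_zero _ hp.ne_zero⟩
  have hN2 : 2 ≤ p ^ r := hp.two_le.trans (Nat.le_self_pow (by omega) p)
  let φ : 𝓞 K →+* QuadraticAlgebra (ZMod (p ^ r)) c t :=
    (auxRed c t (p ^ r)).comp (e.symm : 𝓞 K →+* QuadraticAlgebra ℤ c t)
  have hφs : Function.Surjective φ := (auxRed_surjective c t (p ^ r)).comp e.symm.surjective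
  have hker : RingHom.ker φ = g := by
    ext z
    rw [RingHom.mem_ker, hg, Ideal.mem_span_singleton]
    change auxRed c t (p ^ r) (e.symm z) = 0 ↔ _
    rw [auxRed_ker, ← map_dvd_iff e]
    simp
  let E : (𝓞 K ⧸ g) ≃+* QuadraticAlgebra (ZMod (p ^ r)) c t :=
    (Ideal.quotEquivOfEq hker.symm).trans (RingHom.quotientKerEquivOfSurjective hφs)
  have hE : ∀ z : 𝓞 K, E (Ideal.Quotient.mk g z) = φ z := fun z => rfl
  let f₁ : (𝓞 K)ˣ × (ZMod (p ^ r))ˣ →* (QuadraticAlgebra (ZMod (p ^ r)) c t)ˣ :=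
    (Units.map φ.toMonoidHom).coprod
      (Units.map (algebraMap (ZMod (p ^ r)) (QuadraticAlgebra (ZMod (p ^ r)) c t)).toMonoidHom)
  have hf₁ : ∀ x, (f₁ x : QuadraticAlgebra (ZMod (p ^ r)) c t) = φ x.1 * algebraMap _ _ (x.2 : ZMod (p ^ r)) :=
    fun x => rfl
  let M : (𝓞 K ⧸ g)ˣ ≃* (QuadraticAlgebra (ZMod (p ^ r)) c t)ˣ := Units.mapEquiv E.toMulEquiv
  have hM : ∀ x : (𝓞 K ⧸ g)ˣ, (M x : QuadraticAlgebra (ZMod (p ^ r)) c t) = E x := fun x => rfl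
  -- the image
  have hrange : (unitsIntSubgroup K g).map M.toMonoidHom = f₁.range := by
    apply le_antisymm
    · rw [Subgroup.map_le_iff_le_comap, unitsIntSubgroup, Subgroup.closure_le]
      rintro x (⟨u, rfl⟩ | ⟨n, hn⟩)
      · refine ⟨(u, 1), ?_⟩
        ext1
        rw [hf₁]
        simp only [Units.val_one, map_one, mul_one]
        exact (hE u).symm
      · have h1 : (M x : QuadraticAlgebra (ZMod (p ^ r)) c t) = algebraMap _ _ (n : ZMod (p ^ r)) := by
          rw [hM, hn, hE]; simp
        have h3 : IsUnit (n : ZMod (p ^ r)) := by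
          have := (M x).isUnit
          rw [h1, QuadraticAlgebra.isUnit_iff_norm_isUnit, QuadraticAlgebra.norm_algebraMap] at this
          exact (isUnit_pow_iff two_ne_zero).1 this
        refine ⟨(1, h3.unit), ?_⟩
        ext1
        rw [hf₁]
        simp only [Units.val_one, map_one, one_mul, IsUnit.unit_spec]
        exact h1.symm
    · rintro _ ⟨⟨u, a⟩, rfl⟩
      have hsplit : f₁ (u, a) = f₁ (u, 1) * f₁ (1, a) := by rw [← map_mul]; simp
      rw [hsplit]
      refine mul_mem ?_ ?_
      · refine ⟨Units.map (Ideal.Quotient.mk g : 𝓞 K →+* 𝓞 K ⧸ g).toMonoidHom u,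
          Subgroup.subset_closure (Or.inl ⟨u, rfl⟩), ?_⟩
        ext1
        rw [hf₁]
        simp only [Units.val_one, map_one, mul_one]
        exact (hE u)
      · refine ⟨M.symm (f₁ (1, a)), Subgroup.subset_closure (Or.inr ?_), M.apply_symm_apply _⟩
        obtain ⟨n, hn⟩ := ZMod.intCast_surjective (a : ZMod (p ^ r))
        refine ⟨n, E.injective ?_⟩
        rw [← hM, M.apply_symm_apply, hf₁, hE, ← hn]
        simp
  -- the kernel
  have hkerf : Nat.card f₁.ker = 2 := by
    have hset : (f₁.ker : Set ((𝓞 K)ˣ × (ZMod (p ^ r))ˣ)) = {(1, 1), (-1, -1)} := by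
      ext ⟨u, a⟩
      simp only [SetLike.mem_coe, MonoidHom.mem_ker, Set.mem_insert_iff, Set.mem_singleton_iff]
      constructor
      · intro h
        have h1 : φ u * algebraMap _ _ (a : ZMod (p ^ r)) = 1 := by
          rw [← hf₁ (u, a), h]; rfl
        have h3 := congrArg QuadraticAlgebra.im h1
        simp only [QuadraticAlgebra.im_mul, QuadraticAlgebra.algebraMap_re, QuadraticAlgebra.algebraMap_im,
          mul_zero, zero_add, add_zero, QuadraticAlgebra.im_one] at h3
        have h4 : (φ u).im = 0 := by simpa using h3
        have h5 : ((e.symm u).im : ZMod (p ^ r)) = 0 := h4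
        rw [ZMod.intCast_zmod_eq_zero_iff_dvd] at h5
        have h6 := aux_unit_s9 c t hd (e.symm u) (u.isUnit.map e.symm) _ (by exact_mod_cast hN2) h5
        have h7 : u = 1 ∨ u = -1 := by
          rcases h6 with h6 | h6
          · left; ext1; apply e.symm.injective; rw [h6]; simp
          · right; ext1; apply e.symm.injective; rw [h6]; simp
        have hinj : Function.Injective (algebraMap (ZMod (p ^ r)) (QuadraticAlgebra (ZMod (p ^ r)) c t)) :=
          QuadraticAlgebra.algebraMap_injective
        rcases h7 with rfl | rfl
        · left
          refine Prod.ext rfl (Units.ext (hinj ?_))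
          simpa using h1
        · right
          refine Prod.ext rfl (Units.ext (hinj ?_))
          simp only [Units.val_neg, Units.val_one, map_neg, map_one] at h1 ⊢
          linear_combination -h1
      · rintro (h | h)
        · rw [h]; exact map_one f₁
        · rw [h]; ext1; rw [hf₁]; simp
    change Nat.card (f₁.ker : Set ((𝓞 K)ˣ × (ZMod (p ^ r))ˣ)) = 2
    rw [hset, Nat.card_coe_set_eq, Set.ncard_pair]
    intro h
    have h1 := congrArg (fun x => ((Prod.fst x : (𝓞 K)ˣ) : 𝓞 K)) h
    simp only [Units.val_neg, Units.val_one] at h1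
    have h3 : (2 : 𝓞 K) = 0 := by linear_combination h1
    exact two_ne_zero h3
  have hH : Nat.card (unitsIntSubgroup K g) = Nat.card f₁.range := by
    rw [← hrange]
    exact Nat.card_congr ((unitsIntSubgroup K g).equivMapOfInjective M.toMonoidHom M.injective).toEquiv
  have hA := Subgroup.card_mul_index f₁.ker
  rw [hkerf, Subgroup.index_ker, ← hH, Nat.card_prod, Nat.card_eq_fintype_card (α := (ZMod (p ^ r))ˣ),
    ZMod.card_units_eq_totient, Nat.totient_prime_pow hp (by omega)] at hA
  have hB := Subgroup.card_eq_card_quotient_mul_card_subgroup (unitsIntSubgroup K g)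
  have hC := aux_cardUnits p r hr c t
  rw [← Nat.card_congr M.toEquiv, hB] at hC
  have hA' := congrArg (Nat.cast : ℕ → ℤ) hA
  push_cast [Nat.cast_sub hp.one_le] at hA' hC
  have hp1 : (p : ℤ) ^ (r - 1) * (p - 1) ≠ 0 := by
    have := hp.two_le
    have h3 : (p : ℤ) - 1 ≠ 0 := by omega
    have h4 : (p : ℤ) ≠ 0 := by omega
    positivity
  apply mul_right_cancel₀ hp1
  rw [pow_mul', sq] at hC
  linear_combination (-(Nat.card ((𝓞 K ⧸ g)ˣ ⧸ unitsIntSubgroup K g) : ℤ)) * hA' + 2 * hC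
end
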